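/- arXiv:math/0602646 — 2 statements merged into one kernel-verified Lean document; each statement's English description precedes it below -/
import Mathlib

section
/- Let k be a field and k[ε] the ring of dual numbers over k. The map f ↦ φ_f, where φ_f is the k[ε]-algebra automorphism of k[ε][t] with φ_f(t) = t + ε·f(t), is a group isomorphism from the additive group (k[t], +) onto the group, under composition, of all k[ε]-algebra automorphisms φ of k[ε][t] such that φ(t) − t ∈ ε·k[ε][t] (i.e. φ is congruent to the identity modulo ε). In particular φ_f ∘ φ_g = φ_{f+g} for all f, g ∈ k[t]. -/
/-!
Write `u f = t + ε f`. Since `h(t + ε f) ≡ h(t)` modulo `ε` and `ε² = 0`, the substitution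
`t ↦ u f` fixes every element of `ε·k[ε][t]` (`eps_mul_aeval`). Hence composing the substitutions
`t ↦ u f` and `t ↦ u g` gives `t ↦ u (f + g)`; in particular `t ↦ u (-f)` inverts `t ↦ u f`.
Finally `ε·k[ε][t]` is a copy of `k[t]`: every `ε a` equals `ε` times the reduction of `a`
modulo `ε` (`eps_mul_map_fst`), and `f ↦ ε f` is injective on `k[t]` (`eps_mul_map_injective`).
An endomorphism is determined by its value at `t`, so these facts give the isomorphism.
-/

open Polynomial DualNumber

theorem C_eps_mul_C_eps (k : Type*) [Field k] :
    (C ε * C ε : Polynomial (DualNumber k)) = 0 := by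
  rw [← C_mul, eps_mul_eps, C_0]

/-- A substitution congruent to the identity modulo `ε` fixes the ideal `ε·k[ε][t]` pointwise. -/
theorem eps_mul_aeval {k : Type*} [Field k] (p h : Polynomial (DualNumber k)) :
    C ε * aeval (X + C ε * p) h = C ε * h := by
  have hdvd := sub_dvd_eval_sub (X + C ε * p) X (h.map C)
  rw [add_sub_cancel_left, eval_map, eval_map, eval₂_C_X] at hdvd
  obtain ⟨c, hc⟩ := hdvd
  have ha : aeval (X + C ε * p) h = eval₂ C (X + C ε * p) h := rfl
  rw [ha, ← sub_eq_zero, ← mul_sub, hc, mul_assoc, ← mul_assoc, C_eps_mul_C_eps, zero_mul]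

/-- Stated separately because `mul_comm` does not unify here: the semiring structure inferred for
`k[ε][t]` agrees with its commutative one only after unfolding instances. -/
theorem C_eps_mul_comm {k : Type*} [Field k] (a : Polynomial (DualNumber k)) :
    C ε * a = a * C ε := by
  ext n <;> simp [mul_comm]

/-- Multiplication by `ε` only sees the reduction modulo `ε`, here the coefficientwise `fst`. -/
theorem eps_mul_map_fst {k : Type*} [Field k] (a : Polynomial (DualNumber k)) :
    C ε * (a.map (TrivSqZeroExt.fstHom k k k).toRingHom).map (algebraMap k (DualNumber k))
      = C ε * a := by
  ext n <;> simp [TrivSqZeroExt.algebraMap_eq_inl]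

theorem eps_mul_map_injective {k : Type*} [Field k] :
    Function.Injective fun f : Polynomial k =>
      (C ε * f.map (algebraMap k (DualNumber k)) : Polynomial (DualNumber k)) := by
  intro f g h
  ext n
  simpa [TrivSqZeroExt.algebraMap_eq_inl] using
    congrArg (fun p : Polynomial (DualNumber k) => (p.coeff n).snd) h

/-- The `k[ε]`-algebra endomorphism `t ↦ t + ε f(t)` of `k[ε][t]`. -/
noncomputable def epsShift {k : Type*} [Field k] (f : Polynomial k) :
    Polynomial (DualNumber k) →ₐ[DualNumber k] Polynomial (DualNumber k) :=
  aeval (X + C ε * f.map (algebraMap k (DualNumber k)))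

theorem epsShift_X {k : Type*} [Field k] (f : Polynomial k) :
    epsShift f X = X + C ε * f.map (algebraMap k (DualNumber k)) :=
  aeval_X _

theorem epsShift_C_eps_mul {k : Type*} [Field k] (f : Polynomial k)
    (h : Polynomial (DualNumber k)) : epsShift f (C ε * h) = C ε * h := by
  rw [map_mul, epsShift, aeval_C, algebraMap_eq, eps_mul_aeval]

theorem epsShift_comp {k : Type*} [Field k] (f g : Polynomial k) :
    (epsShift g).comp (epsShift f) = epsShift (f + g) := by
  apply Polynomial.algHom_ext
  rw [AlgHom.comp_apply, epsShift_X, map_add, epsShift_C_eps_mul, epsShift_X, epsShift_X,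
    Polynomial.map_add]
  ring

theorem epsShift_zero (k : Type*) [Field k] :
    epsShift (0 : Polynomial k) = AlgHom.id (DualNumber k) (Polynomial (DualNumber k)) := by
  apply Polynomial.algHom_ext
  simp [epsShift_X]

/-- The automorphism `t ↦ t + ε f(t)` of `k[ε][t]`, with inverse `t ↦ t - ε f(t)`. -/
noncomputable def epsShiftEquiv {k : Type*} [Field k] (f : Polynomial k) :
    Polynomial (DualNumber k) ≃ₐ[DualNumber k] Polynomial (DualNumber k) :=
  AlgEquiv.ofAlgHom (epsShift f) (epsShift (-f))
    (by rw [epsShift_comp, neg_add_cancel, epsShift_zero])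
    (by rw [epsShift_comp, add_neg_cancel, epsShift_zero])

theorem epsShiftEquiv_X {k : Type*} [Field k] (f : Polynomial k) :
    epsShiftEquiv f X = X + C ε * f.map (algebraMap k (DualNumber k)) :=
  epsShift_X f

/-- Let `k` be a field and `k[ε]` the ring of dual numbers over `k`.  The map
`f ↦ φ_f`, where `φ_f` is the `k[ε]`-algebra automorphism of `k[ε][t]` with
`φ_f(t) = t + ε·f(t)`, is a group isomorphism from the additive group `(k[t], +)`
onto the group (under composition) of all `k[ε]`-algebra automorphisms `φ` of
`k[ε][t]` with `φ(t) − t ∈ ε·k[ε][t]`.  In particular `φ_f ∘ φ_g = φ_{f+g}`. -/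
theorem stmt1 (k : Type*) [Field k] :
    ∃ Φ : Polynomial k →
      (Polynomial (DualNumber k) ≃ₐ[DualNumber k] Polynomial (DualNumber k)),
      (∀ f : Polynomial k,
          Φ f X = X + C ε * f.map (algebraMap k (DualNumber k))) ∧
      Function.Injective Φ ∧
      (∀ f g : Polynomial k, (Φ f).trans (Φ g) = Φ (f + g)) ∧
      (∀ f : Polynomial k, Φ f X - X ∈ Ideal.span {(C ε : Polynomial (DualNumber k))}) ∧
      (∀ ψ : Polynomial (DualNumber k) ≃ₐ[DualNumber k] Polynomial (DualNumber k),
        ψ X - X ∈ Ideal.span {(C ε : Polynomial (DualNumber k))} → ∃ f, Φ f = ψ) := by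
  refine ⟨epsShiftEquiv, epsShiftEquiv_X, ?_, ?_, ?_, ?_⟩
  · intro f g h
    apply eps_mul_map_injective
    have hX := DFunLike.congr_fun h X
    rw [epsShiftEquiv_X, epsShiftEquiv_X] at hX
    exact add_left_cancel hX
  · intro f g
    exact AlgEquiv.ext fun p => DFunLike.congr_fun (epsShift_comp f g) p
  · intro f
    rw [epsShiftEquiv_X, add_sub_cancel_left]
    exact Ideal.mem_span_singleton'.mpr ⟨_, (C_eps_mul_comm _).symm⟩
  · intro ψ hψ
    obtain ⟨a, ha⟩ := Ideal.mem_span_singleton'.mp hψ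
    refine ⟨a.map (TrivSqZeroExt.fstHom k k k).toRingHom, ?_⟩
    have hhom : epsShift (a.map (TrivSqZeroExt.fstHom k k k).toRingHom) = (ψ : _ →ₐ[_] _) := by
      apply Polynomial.algHom_ext
      rw [epsShift_X, eps_mul_map_fst, C_eps_mul_comm, ha]
      exact add_sub_cancel _ _
    exact AlgEquiv.ext fun p => DFunLike.congr_fun hhom p
end

section
/- Let B' be a Noetherian commutative ring, q : B' → B a surjective ring homomorphism with nilpotent kernel, and S ⊆ B' a multiplicative submonoid. Then the localization S⁻¹B' is a finitely generated B'-algebra if and only if the localization q(S)⁻¹B is a finitely generated B-algebra. -/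
/-!
The surjection `q` induces a surjection `φ : S⁻¹B' → q(S)⁻¹B` whose kernel is `N · S⁻¹B'`,
where `N = ker q`. Finite generation therefore passes from `S⁻¹B'` to its quotient.

Conversely, lift finitely many generators of `q(S)⁻¹B` to `S⁻¹B'` and let `C` be the
`B'`-subalgebra they generate. Then `S⁻¹B' = C + N · S⁻¹B'`, and substituting this equation into
itself gives `S⁻¹B' = C + Nⁿ · S⁻¹B'` for all `n`, so `S⁻¹B' = C` because `N` is nilpotent
(`Submodule.eq_top_of_sup_smul_top`, `Algebra.FiniteType.of_surjective_of_ker_le`).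
-/

/-- Nakayama's lemma for a nilpotent ideal, without any finiteness assumption on the module. -/
theorem Submodule.eq_top_of_sup_smul_top {R M : Type*} [CommRing R] [AddCommMonoid M] [Module R M]
    {I : Ideal R} (hI : IsNilpotent I) (C : Submodule R M)
    (h : C ⊔ I • (⊤ : Submodule R M) = ⊤) : C = ⊤ := by
  have key : ∀ n : ℕ, C ⊔ I ^ n • (⊤ : Submodule R M) = ⊤ := by
    intro n
    induction n with
    | zero => simp
    | succ n ih =>
      have h2 : I • (⊤ : Submodule R M) ≤ C ⊔ I ^ (n + 1) • (⊤ : Submodule R M) := by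
        calc I • (⊤ : Submodule R M) = I • (C ⊔ I ^ n • ⊤) := by rw [ih]
          _ = I • C ⊔ I ^ (n + 1) • ⊤ := by
            rw [Submodule.smul_sup, ← Submodule.mul_smul, ← pow_succ']
          _ ≤ C ⊔ I ^ (n + 1) • ⊤ := sup_le_sup_right Submodule.smul_le_right _
      exact eq_top_iff.2 (h.ge.trans (sup_le le_sup_left h2))
  obtain ⟨n, hn⟩ := hI
  simpa [hn] using key n

/-- Finite generation lifts along a surjection of `R`-algebras whose kernel is contained in the
extension of a nilpotent ideal of `R`. -/
theorem Algebra.FiniteType.of_surjective_of_ker_le {R A L : Type*} [CommRing R] [CommRing A]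
    [CommRing L] [Algebra R A] [Algebra R L] (g : A →ₐ[R] L) (hg : Function.Surjective g)
    {I : Ideal R} (hI : IsNilpotent I)
    (hker : RingHom.ker g ≤ I.map (algebraMap R A)) [hL : Algebra.FiniteType R L] :
    Algebra.FiniteType R A := by
  classical
  obtain ⟨t, ht⟩ := hL.out
  choose σ hσ using hg
  have himg : g '' (σ '' (t : Set L)) = t := by
    rw [Set.image_image]; simp [hσ]
  refine ⟨⟨t.image σ, ?_⟩⟩
  rw [Finset.coe_image, ← Algebra.toSubmodule_eq_top]
  refine Submodule.eq_top_of_sup_smul_top hI _ ?_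
  rw [_root_.eq_top_iff]
  intro a _
  have ha : g a ∈ (Algebra.adjoin R (σ '' (t : Set L))).map g := by
    rw [AlgHom.map_adjoin, himg, ht]; trivial
  obtain ⟨c, hc, hca⟩ := ha
  have hac : a - c ∈ I.map (algebraMap R A) := hker <| by
    rw [RingHom.mem_ker, map_sub, sub_eq_zero]; exact hca.symm
  rw [← add_sub_cancel c a]
  refine Submodule.add_mem_sup hc ?_
  rw [Ideal.smul_top_eq_map]
  exact hac



/-- Let `B'` be a Noetherian commutative ring, `q : B' → B` a surjective ring
homomorphism with nilpotent kernel, and `S ⊆ B'` a multiplicative submonoid.  Then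
`S⁻¹B'` is a finitely generated `B'`-algebra if and only if `q(S)⁻¹B` is a finitely
generated `B`-algebra. -/
theorem stmt7 (B' B : Type*) [CommRing B'] [IsNoetherianRing B'] [CommRing B]
    (q : B' →+* B) (hq : Function.Surjective q) (hker : IsNilpotent (RingHom.ker q))
    (S : Submonoid B') :
    Algebra.FiniteType B' (Localization S) ↔
      Algebra.FiniteType B (Localization (Submonoid.map q.toMonoidHom S)) := by
  have hS : S ≤ (S.map q.toMonoidHom).comap q := Submonoid.le_comap_map S
  let φ : Localization S →+* Localization (S.map q.toMonoidHom) := IsLocalization.map _ q hS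
  have hcomp : φ.comp (algebraMap B' (Localization S)) =
      (algebraMap B (Localization (S.map q.toMonoidHom))).comp q := IsLocalization.map_comp hS
  have hφ : Function.Surjective φ := by
    intro y
    obtain ⟨b, ⟨_, s, hs, rfl⟩, rfl⟩ := IsLocalization.exists_mk'_eq (S.map q.toMonoidHom) y
    obtain ⟨b, rfl⟩ := hq b
    exact ⟨IsLocalization.mk' _ b ⟨s, hs⟩, IsLocalization.map_mk' hS _ _⟩
  have hkerφ : RingHom.ker φ ≤ (RingHom.ker q).map (algebraMap B' (Localization S)) := by
    intro x hx
    obtain ⟨b, s, rfl⟩ := IsLocalization.exists_mk'_eq S x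
    rw [RingHom.mem_ker, IsLocalization.map_mk' hS, IsLocalization.mk'_eq_zero_iff] at hx
    obtain ⟨⟨_, u, hu, rfl⟩, hx⟩ := hx
    rw [IsLocalization.mk'_mem_map_algebraMap_iff]
    refine ⟨u, hu, ?_⟩
    rw [RingHom.mem_ker, map_mul]
    exact hx
  constructor
  · intro h
    have h1 : (algebraMap B' (Localization S)).FiniteType := RingHom.finiteType_algebraMap.2 h
    have h2 := h1.comp_surjective hφ
    rw [hcomp] at h2
    exact RingHom.finiteType_algebraMap.1 h2.of_comp_finiteType
  · intro h
    have h1 := (RingHom.finiteType_algebraMap.2 h).comp (RingHom.FiniteType.of_surjective q hq)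
    rw [← hcomp] at h1
    let : Algebra B' (Localization (S.map q.toMonoidHom)) :=
      (φ.comp (algebraMap B' (Localization S))).toAlgebra
    have : Algebra.FiniteType B' (Localization (S.map q.toMonoidHom)) := h1
    exact Algebra.FiniteType.of_surjective_of_ker_le
      ({ φ with commutes' := fun _ => rfl } :
        Localization S →ₐ[B'] Localization (S.map q.toMonoidHom)) hφ hker hkerφ
end
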